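/- For each n ≥ 2 let X⁽ⁿ⁾ and Y⁽ⁿ⁾ be independent random vectors uniformly distributed on the unit Euclidean sphere S^{n−1}. Then Var[ ‖X⁽ⁿ⁾ − Y⁽ⁿ⁾‖₂ ] = 2 − ( 2^{n−1} Γ(n/2)² / ( √π Γ(n − 1/2) ) )², and moreover lim_{n→∞} 2n · Var[ ‖X⁽ⁿ⁾ − Y⁽ⁿ⁾‖₂ ] = 1 (in particular Var[ ‖X⁽ⁿ⁾ − Y⁽ⁿ⁾‖₂ ] → 0). -/

import Mathlib

/-!
Write `n = m + 1`. The variance is `E‖X - Y‖² - (E‖X - Y‖)²`, and `E‖X - Y‖² = 2` follows from the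
parallelogram identity and the invariance of the law under `y ↦ -y`.

For the mean, invariance and transitivity of isometries on the sphere show that
`G(x) = ∫ ‖x - z‖ dν(z)` is the same for all unit vectors `x`. Averaging `G(y / ‖y‖)` over the unit
ball with Lebesgue measure and exchanging the integrals, the rotation invariance of Lebesgue
measure replaces `z` by the first basis vector `e`, so `E‖X - Y‖` is the average of `‖y / ‖y‖ - e‖`
over the ball (`lintegral_dist_sphere`). In spherical coordinates around `e`
(`lintegral_spherical`) this is `∫ 2 sin(θ/2) sin^(m-1) θ dθ / ∫ sin^(m-1) θ dθ` over `(0, π)`, and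
`x = sin²(θ/2)` turns both integrals into Beta integrals (`lintegral_sin_pow_mul`). The measure
theory is done with `ℝ≥0∞`-valued integrals, which need no integrability side conditions.

With `h(x) = Γ(x + 1/2) / Γ(x)` (`gammaRatio`) the mean equals `2 h(m/2) / h(m)`, which is the stated
expression by Legendre duplication. The limit needs `h(x)² = x - 1/4 + O(1/x)`. Log-convexity of
`Γ` gives `x - 1/2 ≤ h(x)² ≤ x`, hence `h(x)² / D(x) → 1` whenever `D(x) ~ x`; since
`h(x+1) = h(x) (x + 1/2) / x`, the quotient `h² / D` is decreasing along `x, x + 1, …` for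
`D(x) = x - 1/4` and increasing for `D(x) = x - 1/4 + 1/x`, which gives
`x - 1/4 ≤ h(x)² ≤ x - 1/4 + 1/x`.
-/

open MeasureTheory ProbabilityTheory Real Filter Topology

/-- The Euclidean norm `‖x‖₂ = (∑ x_i²)^{1/2}` on `ℝ^n`. -/
noncomputable def enorm2 {n : ℕ} (x : Fin n → ℝ) : ℝ := Real.sqrt (∑ i, (x i) ^ 2)

/-- `ν` is the uniform (rotation-invariant) probability measure on the unit Euclidean
sphere `S^{n-1} ⊆ ℝ^n`. -/
def IsUniformSphere {n : ℕ} (ν : Measure (Fin n → ℝ)) : Prop :=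
  IsProbabilityMeasure ν ∧ ν {x | enorm2 x = 1} = 1 ∧
    ∀ L : (Fin n → ℝ) ≃ₗ[ℝ] (Fin n → ℝ),
      (∀ x, enorm2 (L x) = enorm2 x) → Measure.map L ν = ν

/-! ### The ratio `Γ(x + 1/2) / Γ(x)` -/

/-- The Wendel ratio `Γ(x + 1/2) / Γ(x)`. -/
noncomputable def gammaRatio (x : ℝ) : ℝ := Real.Gamma (x + 1 / 2) / Real.Gamma x

lemma gammaRatio_pos {x : ℝ} (hx : 0 < x) : 0 < gammaRatio x :=
  div_pos (Real.Gamma_pos_of_pos (by linarith)) (Real.Gamma_pos_of_pos hx)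

lemma gammaRatio_add_one {x : ℝ} (hx : 0 < x) :
    gammaRatio (x + 1) = gammaRatio x * ((x + 1 / 2) / x) := by
  unfold gammaRatio
  have h := (Real.Gamma_pos_of_pos hx).ne'
  rw [show x + 1 + 1 / 2 = (x + 1 / 2) + 1 by ring, Real.Gamma_add_one hx.ne',
    Real.Gamma_add_one (by linarith : x + 1 / 2 ≠ 0)]
  field_simp

/-- Midpoint log-convexity of `Γ`, at step `1/2`. -/
lemma Gamma_sq_le {x : ℝ} (hx : 0 < x) :
    Real.Gamma (x + 1 / 2) ^ 2 ≤ Real.Gamma x * Real.Gamma (x + 1) := by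
  have h := Real.Gamma_mul_add_mul_le_rpow_Gamma_mul_rpow_Gamma hx (by linarith : 0 < x + 1)
    (by norm_num : (0 : ℝ) < 1 / 2) (by norm_num : (0 : ℝ) < 1 / 2) (by norm_num)
  rw [show 1 / 2 * x + 1 / 2 * (x + 1) = x + 1 / 2 by ring, ← Real.sqrt_eq_rpow,
    ← Real.sqrt_eq_rpow] at h
  have h0 := (Real.Gamma_pos_of_pos hx).le
  have h1 := (Real.Gamma_pos_of_pos (by linarith : 0 < x + 1)).le
  calc Real.Gamma (x + 1 / 2) ^ 2 ≤ (√(Real.Gamma x) * √(Real.Gamma (x + 1))) ^ 2 :=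
        pow_le_pow_left₀ (Real.Gamma_pos_of_pos (by linarith)).le h 2
    _ = _ := by rw [mul_pow, Real.sq_sqrt h0, Real.sq_sqrt h1]

lemma gammaRatio_sq_le {x : ℝ} (hx : 0 < x) : gammaRatio x ^ 2 ≤ x := by
  have h := Gamma_sq_le hx
  have h0 := Real.Gamma_pos_of_pos hx
  rw [Real.Gamma_add_one hx.ne'] at h
  rw [gammaRatio, div_pow, div_le_iff₀ (by positivity)]
  linarith

lemma le_gammaRatio_sq {x : ℝ} (hx : 1 / 2 < x) : x - 1 / 2 ≤ gammaRatio x ^ 2 := by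
  have h := Gamma_sq_le (by linarith : 0 < x - 1 / 2)
  have h0 := Real.Gamma_pos_of_pos (by linarith : 0 < x)
  have h2 := Real.Gamma_add_one (by linarith : x - 1 / 2 ≠ 0)
  rw [show x - 1 / 2 + 1 = x + 1 / 2 by ring] at h h2
  rw [show x - 1 / 2 + 1 / 2 = x by ring] at h
  rw [gammaRatio, div_pow, le_div_iff₀ (by positivity)]
  calc (x - 1 / 2) * Real.Gamma x ^ 2
      ≤ (x - 1 / 2) * (Real.Gamma (x - 1 / 2) * Real.Gamma (x + 1 / 2)) := by gcongr
    _ = _ := by rw [h2]; ring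

/-- Here `D` is any comparison function with `D y ~ y`. -/
lemma tendsto_gammaRatio_div (x : ℝ) (D : ℝ → ℝ)
    (hD : Tendsto (fun y : ℝ => D y / y) atTop (𝓝 1)) :
    Tendsto (fun k : ℕ => gammaRatio (x + k) ^ 2 / D (x + k)) atTop (𝓝 1) := by
  have hu : Tendsto (fun k : ℕ => x + (k : ℝ)) atTop atTop :=
    tendsto_atTop_add_const_left _ _ tendsto_natCast_atTop_atTop
  have h1 : Tendsto (fun y : ℝ => gammaRatio y ^ 2 / y) atTop (𝓝 1) := by
    have h0 : Tendsto (fun y : ℝ => 1 - 1 / 2 * y⁻¹) atTop (𝓝 1) := by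
      simpa using (tendsto_inv_atTop_zero.const_mul (1 / 2 : ℝ)).const_sub 1
    refine tendsto_of_tendsto_of_tendsto_of_le_of_le' h0 tendsto_const_nhds ?_ ?_
    · filter_upwards [eventually_gt_atTop 1] with y hy
      rw [le_div_iff₀ (by linarith)]
      have := le_gammaRatio_sq (by linarith : 1 / 2 < y)
      have e : (1 - 1 / 2 * y⁻¹) * y = y - 1 / 2 := by
        have : y ≠ 0 := by linarith
        field_simp
      linarith
    · filter_upwards [eventually_gt_atTop 1] with y hy
      rw [div_le_one (by linarith)]
      exact gammaRatio_sq_le (by linarith)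
  have h2 : Tendsto (fun y : ℝ => gammaRatio y ^ 2 / D y) atTop (𝓝 1) := by
    have := h1.div hD one_ne_zero
    rw [div_one] at this
    refine this.congr' ?_
    filter_upwards [eventually_gt_atTop 1] with y hy
    have : y ≠ 0 := by linarith
    simp only [Pi.div_apply]
    rw [div_div_div_cancel_right₀ this]
  exact h2.comp hu

lemma gammaRatio_step {y a b : ℝ} (hy : 0 < y) (ha : 0 < a) (hb : 0 < b) :
    gammaRatio (y + 1) ^ 2 / b =
      gammaRatio y ^ 2 / a * (((y + 1 / 2) ^ 2 * a) / (y ^ 2 * b)) := by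
  rw [gammaRatio_add_one hy]
  field_simp

/-- The quotient of `gammaRatio x ^ 2` by `x - 1/4` decreases along `x ↦ x + 1` towards `1`. -/
lemma sub_quarter_le_gammaRatio_sq {x : ℝ} (hx : 1 / 2 < x) : x - 1 / 4 ≤ gammaRatio x ^ 2 := by
  have hanti : Antitone (fun k : ℕ => gammaRatio (x + k) ^ 2 / ((x + k) - 1 / 4)) := by
    refine antitone_nat_of_succ_le fun k => ?_
    have hk : (0 : ℝ) ≤ k := Nat.cast_nonneg k
    generalize hy : x + (k : ℝ) = y
    have hy' : 1 / 2 < y := by linarith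
    rw [show x + ((k + 1 : ℕ) : ℝ) = y + 1 by push_cast; linarith,
      gammaRatio_step (a := y - 1 / 4) (by linarith) (by linarith) (by linarith)]
    have h0 : 0 < y - 1 / 4 := by linarith
    refine mul_le_of_le_one_right (by positivity) ?_
    rw [div_le_one (mul_pos (by positivity) (by linarith))]
    nlinarith
  have hlim := tendsto_gammaRatio_div x (fun y => y - 1 / 4) (by
    have h0 : Tendsto (fun y : ℝ => 1 - 1 / 4 * y⁻¹) atTop (𝓝 1) := by
      simpa using (tendsto_inv_atTop_zero.const_mul (1 / 4 : ℝ)).const_sub 1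
    refine h0.congr' ?_
    filter_upwards [eventually_gt_atTop 0] with y hy
    field_simp)
  have := hanti.le_of_tendsto hlim 0
  simp only [Nat.cast_zero, add_zero] at this
  rwa [one_le_div (by linarith)] at this

/-- The quotient of `gammaRatio x ^ 2` by `x - 1/4 + 1/x` increases along `x ↦ x + 1`
towards `1`. -/
lemma gammaRatio_sq_le_sub_quarter {x : ℝ} (hx : 1 / 2 < x) :
    gammaRatio x ^ 2 ≤ x - 1 / 4 + 1 / x := by
  have hpos : ∀ y : ℝ, 1 / 2 < y → 0 < y - 1 / 4 + 1 / y := fun y hy => by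
    have : 0 < 1 / y := by apply one_div_pos.2; linarith
    linarith
  have hmono : Monotone (fun k : ℕ => gammaRatio (x + k) ^ 2 / ((x + k) - 1 / 4 + 1 / (x + k))) := by
    refine monotone_nat_of_le_succ fun k => ?_
    have hk : (0 : ℝ) ≤ k := Nat.cast_nonneg k
    generalize hy : x + (k : ℝ) = y
    have hy' : 1 / 2 < y := by linarith
    have hy0 : 0 < y := by linarith
    rw [show x + ((k + 1 : ℕ) : ℝ) = y + 1 by push_cast; linarith,
      gammaRatio_step hy0 (hpos y hy') (hpos (y + 1) (by linarith))]
    refine le_mul_of_one_le_right (div_nonneg (by positivity) (hpos y hy').le) ?_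
    rw [one_le_div (mul_pos (by positivity) (hpos (y + 1) (by linarith)))]
    have e : (y + 1 / 2) ^ 2 * (y - 1 / 4 + 1 / y) - y ^ 2 * (y + 1 - 1 / 4 + 1 / (y + 1))
        = (31 * y ^ 2 + 19 * y + 4) / (16 * y * (y + 1)) := by
      field_simp
      ring
    have : 0 ≤ (31 * y ^ 2 + 19 * y + 4) / (16 * y * (y + 1)) := by positivity
    linarith
  have hlim := tendsto_gammaRatio_div x (fun y => y - 1 / 4 + 1 / y) (by
    have h0 : Tendsto (fun y : ℝ => 1 - 1 / 4 * y⁻¹ + y⁻¹ * y⁻¹) atTop (𝓝 1) := by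
      simpa using ((tendsto_inv_atTop_zero.const_mul (1 / 4 : ℝ)).const_sub 1).add
        ((tendsto_inv_atTop_zero (𝕜 := ℝ)).mul tendsto_inv_atTop_zero)
    refine h0.congr' ?_
    filter_upwards [eventually_gt_atTop 0] with y hy
    field_simp)
  have := hmono.ge_of_tendsto hlim 0
  simp only [Nat.cast_zero, add_zero] at this
  rwa [div_le_one (hpos x hx)] at this

/-- The mean distance, rewritten by Legendre duplication as a quotient of two values of
`gammaRatio`. -/
lemma mean_eq_gammaRatio {m : ℕ} (hm : 1 ≤ m) :
    2 ^ m * Real.Gamma (((m + 1 : ℕ) : ℝ) / 2) ^ 2 /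
      (√π * Real.Gamma (((m + 1 : ℕ) : ℝ) - 1 / 2)) =
      2 * gammaRatio (m / 2) / gammaRatio m := by
  have hm' : (0 : ℝ) < m := by exact_mod_cast hm
  have h := Real.Gamma_mul_Gamma_add_half ((m : ℝ) / 2)
  have h1 := (Real.Gamma_pos_of_pos hm').ne'
  have h2 := (Real.Gamma_pos_of_pos (by positivity : 0 < (m : ℝ) / 2)).ne'
  have h3 := (Real.Gamma_pos_of_pos (by positivity : 0 < (m : ℝ) / 2 + 1 / 2)).ne'
  have h4 := (Real.Gamma_pos_of_pos (by positivity : 0 < (m : ℝ) + 1 / 2)).ne'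
  have h5 : √π ≠ 0 := by positivity
  rw [show 2 * ((m : ℝ) / 2) = m by ring, Real.rpow_sub two_pos, Real.rpow_one,
    Real.rpow_natCast] at h
  unfold gammaRatio
  push_cast
  rw [show ((m : ℝ) + 1) / 2 = m / 2 + 1 / 2 by ring,
    show (m : ℝ) + 1 - 1 / 2 = m + 1 / 2 by ring]
  field_simp at h ⊢
  linear_combination h

/-- With `h = gammaRatio`, the last factor is `(2 h(m)² - 4 h(m/2)²) / h(m)²`, where the numerator
tends to `-2/4 + 4/4 = 1/2` and `h(m)² ~ m + 1`. -/
lemma tendsto_gamma_expr :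
    Tendsto (fun m : ℕ => 2 * ((m : ℝ) + 1) * (2 - (2 * gammaRatio (m / 2) / gammaRatio m) ^ 2))
      atTop (𝓝 1) := by
  have hB : Tendsto (fun m : ℕ => gammaRatio m ^ 2 / ((m : ℝ) + 1)) atTop (𝓝 1) := by
    have h0 : Tendsto (fun y : ℝ => 1 + y⁻¹) atTop (𝓝 1) := by
      simpa using tendsto_inv_atTop_zero.const_add (1 : ℝ)
    have := tendsto_gammaRatio_div 0 (fun y => y + 1) (h0.congr' (by
      filter_upwards [eventually_gt_atTop 0] with y hy
      field_simp))
    simpa using this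
  have hN : Tendsto (fun m : ℕ => 2 * gammaRatio m ^ 2 - 4 * gammaRatio (m / 2) ^ 2) atTop
      (𝓝 (1 / 2)) := by
    have hi : Tendsto (fun m : ℕ => ((m : ℝ))⁻¹) atTop (𝓝 0) := tendsto_inv_atTop_nhds_zero_nat
    have hl : Tendsto (fun m : ℕ => 1 / 2 - 8 * ((m : ℝ))⁻¹) atTop (𝓝 (1 / 2)) := by
      simpa using (hi.const_mul 8).const_sub (1 / 2 : ℝ)
    have hu : Tendsto (fun m : ℕ => 1 / 2 + 2 * ((m : ℝ))⁻¹) atTop (𝓝 (1 / 2)) := by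
      simpa using (hi.const_mul 2).const_add (1 / 2 : ℝ)
    refine tendsto_of_tendsto_of_tendsto_of_le_of_le' hl hu ?_ ?_ <;>
    · filter_upwards [eventually_gt_atTop 1] with m hm
      have hm' : (1 : ℝ) < m := by exact_mod_cast hm
      have a1 := sub_quarter_le_gammaRatio_sq (by linarith : (1 : ℝ) / 2 < m)
      have a2 := gammaRatio_sq_le_sub_quarter (by linarith : (1 : ℝ) / 2 < m)
      have a3 := sub_quarter_le_gammaRatio_sq (by linarith : (1 : ℝ) / 2 < m / 2)
      have a4 := gammaRatio_sq_le_sub_quarter (by linarith : (1 : ℝ) / 2 < m / 2)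
      have e1 : 1 / ((m : ℝ) / 2) = 2 * (m : ℝ)⁻¹ := by field_simp
      have e2 : 1 / (m : ℝ) = (m : ℝ)⁻¹ := by field_simp
      rw [e1] at a4
      rw [e2] at a2
      linarith
  have := (hN.const_mul 2).div hB one_ne_zero
  norm_num at this
  refine this.congr' ?_
  filter_upwards [eventually_gt_atTop 0] with m hm
  have hm' : (0 : ℝ) < m := by exact_mod_cast hm
  have h1 := (gammaRatio_pos hm').ne'
  simp only [Pi.div_apply]
  field_simp
  ring

/-! ### Spherical coordinates and Beta integrals -/

open scoped ENNReal

/-- Integration of radial functions, in `ℝ≥0∞`-valued form. -/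
lemma lintegral_radial {m : ℕ} (hm : 1 ≤ m) :
    ∃ K : ℝ≥0∞, K ≠ 0 ∧ K ≠ ∞ ∧ ∀ f : ℝ → ℝ≥0∞, Measurable f →
      ∫⁻ z : EuclideanSpace ℝ (Fin m), f ‖z‖ =
        K * ∫⁻ s in Set.Ioi (0 : ℝ), ENNReal.ofReal (s ^ (m - 1)) * f s := by
  have : Nonempty (Fin m) := ⟨⟨0, hm⟩⟩
  have : Nontrivial (EuclideanSpace ℝ (Fin m)) := inferInstance
  let μ : Measure (EuclideanSpace ℝ (Fin m)) := volume
  have hd : Module.finrank ℝ (EuclideanSpace ℝ (Fin m)) = m := by simp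
  refine ⟨μ.toSphere Set.univ, ?_, measure_ne_top _ _, fun f hf => ?_⟩
  · rw [Measure.toSphere_apply_univ, hd]
    refine mul_ne_zero (by exact_mod_cast (by omega : m ≠ 0)) ?_
    exact (Metric.measure_ball_pos μ 0 one_pos).ne'
  · have hg : Measurable (fun x : Set.Ioi (0 : ℝ) => f x) := hf.comp measurable_subtype_coe
    calc ∫⁻ z : EuclideanSpace ℝ (Fin m), f ‖z‖
        = ∫⁻ z : ({(0)}ᶜ : Set (EuclideanSpace ℝ (Fin m))), f ‖z.1‖ ∂(μ.comap (↑)) := by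
          rw [lintegral_subtype_comap (measurableSet_singleton _).compl fun x ↦ f (‖x‖),
            restrict_compl_singleton]
      _ = ∫⁻ x, f x.2 ∂μ.toSphere.prod (.volumeIoiPow (m - 1)) := by
          have := μ.measurePreserving_homeomorphUnitSphereProd.lintegral_comp_emb
            (Homeomorph.measurableEmbedding _) (f ∘ Subtype.val ∘ Prod.snd)
          simpa [hd] using this
      _ = μ.toSphere Set.univ * ∫⁻ x : Set.Ioi (0 : ℝ), f x ∂.volumeIoiPow (m - 1) := by
          rw [lintegral_prod _ (by fun_prop)]
          simp [mul_comm]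
      _ = _ := by
          rw [Measure.volumeIoiPow, lintegral_withDensity_eq_lintegral_mul _ (by fun_prop) hg]
          simp only [Pi.mul_apply]
          rw [lintegral_subtype_comap measurableSet_Ioi
            (fun s : ℝ => ENNReal.ofReal (s ^ (m - 1)) * f s)]

/-- Integration in spherical coordinates around the first axis of `ℝ^(m+1)`. -/
lemma lintegral_spherical {m : ℕ} (hm : 1 ≤ m) :
    ∃ K : ℝ≥0∞, K ≠ 0 ∧ K ≠ ∞ ∧ ∀ w f : ℝ → ℝ≥0∞, Measurable w → Measurable f →
      ∫⁻ y : EuclideanSpace ℝ (Fin (m + 1)), w ‖y‖ * f (y 0 / ‖y‖) =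
        K * (∫⁻ r in Set.Ioi (0 : ℝ), ENNReal.ofReal (r ^ m) * w r) *
          ∫⁻ θ in Set.Ioo 0 π, ENNReal.ofReal (sin θ ^ (m - 1)) * f (cos θ) := by
  obtain ⟨K, hK0, hKt, hK⟩ := lintegral_radial hm
  refine ⟨K, hK0, hKt, fun w f hw hf => ?_⟩
  let G : ℝ × ℝ → ℝ≥0∞ := fun p => w √(p.1 ^ 2 + p.2 ^ 2) * f (p.1 / √(p.1 ^ 2 + p.2 ^ 2))
  have hG : Measurable G := by fun_prop
  let H : ℝ × ℝ → ℝ≥0∞ := fun p =>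
    (Set.Ioi (0 : ℝ)).indicator (fun s => ENNReal.ofReal (s ^ (m - 1)) * G (p.1, s)) p.2
  have hH : Measurable H := by
    have : H = (Set.univ ×ˢ Set.Ioi (0 : ℝ)).indicator
        (fun p : ℝ × ℝ => ENNReal.ofReal (p.2 ^ (m - 1)) * G p) := by
      ext p
      simp [H, Set.indicator]
    rw [this]
    exact Measurable.indicator (by fun_prop) (MeasurableSet.univ.prod measurableSet_Ioi)
  calc ∫⁻ y : EuclideanSpace ℝ (Fin (m + 1)), w ‖y‖ * f (y 0 / ‖y‖)
      = ∫⁻ y : Fin (m + 1) → ℝ, G (y 0, √(∑ i : Fin m, y i.succ ^ 2)) := by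
        rw [← (PiLp.volume_preserving_toLp (Fin (m + 1))).lintegral_comp (by fun_prop)]
        refine lintegral_congr fun y => ?_
        simp only [G, EuclideanSpace.norm_eq, Real.norm_eq_abs, sq_abs, Fin.sum_univ_succ]
        rw [Real.sq_sqrt (by positivity)]
    _ = ∫⁻ p : ℝ × (Fin m → ℝ), G (p.1, √(∑ i : Fin m, p.2 i ^ 2)) := by
        rw [← (volume_preserving_piFinSuccAbove (fun _ : Fin (m + 1) => ℝ) 0).lintegral_comp
          (by fun_prop)]
        simp [MeasurableEquiv.piFinSuccAbove, Fin.tail]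
    _ = ∫⁻ t : ℝ, ∫⁻ z : Fin m → ℝ, G (t, √(∑ i : Fin m, z i ^ 2)) := by
        rw [Measure.volume_eq_prod, lintegral_prod _ (by fun_prop)]
    _ = ∫⁻ t : ℝ, K * ∫⁻ s : ℝ, H (t, s) := by
        refine lintegral_congr fun t => ?_
        have := hK (fun s => G (t, s)) (by fun_prop)
        simp only [H]
        rw [lintegral_indicator measurableSet_Ioi, ← this,
          ← (PiLp.volume_preserving_toLp (Fin m)).lintegral_comp (by fun_prop)]
        refine lintegral_congr fun y => ?_
        simp only [EuclideanSpace.norm_eq, Real.norm_eq_abs, sq_abs]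
    _ = K * ∫⁻ p, H p := by
        rw [lintegral_const_mul _ (by fun_prop), Measure.volume_eq_prod, lintegral_prod _ (by fun_prop)]
    _ = _ := by
        rw [mul_assoc]
        congr 1
        let A : ℝ → ℝ≥0∞ := fun r => ENNReal.ofReal (r ^ m) * w r
        let B : ℝ → ℝ≥0∞ := (Set.Ioo 0 π).indicator
          (fun θ => ENNReal.ofReal (sin θ ^ (m - 1)) * f (cos θ))
        have hA : Measurable A := by fun_prop
        have hB : Measurable B := Measurable.indicator (by fun_prop) measurableSet_Ioo
        have hBint : ∫⁻ θ in Set.Ioo (-π) π, B θ =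
            ∫⁻ θ in Set.Ioo 0 π, ENNReal.ofReal (sin θ ^ (m - 1)) * f (cos θ) := by
          simp only [B]
          rw [lintegral_indicator measurableSet_Ioo, Measure.restrict_restrict measurableSet_Ioo,
            Set.inter_eq_left.2 (Set.Ioo_subset_Ioo_left (by linarith [pi_pos]))]
        have key : ∀ p ∈ polarCoord.target,
            ENNReal.ofReal p.1 • H (polarCoord.symm p) = A p.1 * B p.2 := by
          rintro ⟨r, θ⟩ hp
          simp only [polarCoord_target, Set.mem_prod, Set.mem_Ioi, Set.mem_Ioo] at hp
          obtain ⟨hr, hθ1, hθ2⟩ := hp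
          have hnorm : √((r * cos θ) ^ 2 + (r * sin θ) ^ 2) = r := by
            rw [show (r * cos θ) ^ 2 + (r * sin θ) ^ 2 = r ^ 2 * (sin θ ^ 2 + cos θ ^ 2) by ring,
              sin_sq_add_cos_sq, mul_one, Real.sqrt_sq hr.le]
          simp only [polarCoord_symm_apply, H, G, A, B, smul_eq_mul]
          by_cases hθ : 0 < θ
          · have hs : 0 < sin θ := sin_pos_of_pos_of_lt_pi hθ hθ2
            rw [Set.indicator_of_mem (Set.mem_Ioi.2 (mul_pos hr hs)),
              Set.indicator_of_mem (Set.mem_Ioo.2 ⟨hθ, hθ2⟩), hnorm,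
              mul_div_cancel_left₀ _ hr.ne', mul_pow, ENNReal.ofReal_mul (by positivity)]
            obtain ⟨k, rfl⟩ : ∃ k, m = k + 1 := ⟨m - 1, by omega⟩
            rw [pow_succ r k, ENNReal.ofReal_mul (by positivity : 0 ≤ r ^ k), Nat.add_sub_cancel]
            ring
          · have hs : sin θ ≤ 0 := sin_nonpos_of_nonpos_of_neg_pi_le (not_lt.1 hθ) hθ1.le
            rw [Set.indicator_of_notMem, Set.indicator_of_notMem]
            · simp
            · simp [hθ]
            · simpa using mul_nonpos_of_nonneg_of_nonpos hr.le hs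
        rw [← lintegral_comp_polarCoord_symm,
          setLIntegral_congr_fun polarCoord.open_target.measurableSet key, polarCoord_target,
          Measure.volume_eq_prod, ← Measure.prod_restrict,
          lintegral_prod_mul hA.aemeasurable hB.aemeasurable, hBint]

lemma lintegral_beta {a b : ℝ} (ha : 0 < a) (hb : 0 < b) :
    ∫⁻ x in Set.Ioo (0 : ℝ) 1, ENNReal.ofReal (x ^ (a - 1) * (1 - x) ^ (b - 1)) =
      ENNReal.ofReal (beta a b) := by
  have h := lintegral_betaPDF_eq_one ha hb
  have hp := beta_pos ha hb
  rw [lintegral_betaPDF] at h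
  simp_rw [mul_assoc, ENNReal.ofReal_mul (one_div_pos.2 hp).le] at h
  rw [lintegral_const_mul _ (by fun_prop)] at h
  have h' := congrArg (ENNReal.ofReal (beta a b) * ·) h
  rwa [← mul_assoc, ← ENNReal.ofReal_mul hp.le, mul_one_div_cancel hp.ne', ENNReal.ofReal_one,
    one_mul, mul_one] at h'

/-- The substitution `x = sin² (θ / 2)` turns the angular integrals into Beta integrals. -/
lemma lintegral_sin_pow_mul {m : ℕ} (hm : 1 ≤ m) (k : ℕ) :
    ∫⁻ θ in Set.Ioo 0 π, ENNReal.ofReal (sin θ ^ (m - 1) * sin (θ / 2) ^ k) =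
      ENNReal.ofReal (2 ^ (m - 1) * beta ((m + k) / 2) (m / 2)) := by
  have hm' : (0 : ℝ) < m := by exact_mod_cast hm
  have himg : (fun θ : ℝ => (1 - cos θ) / 2) '' Set.Ioo 0 π = Set.Ioo 0 1 := by
    ext x
    constructor
    · rintro ⟨θ, ⟨h1, h2⟩, rfl⟩
      have hs := sin_pos_of_pos_of_lt_pi h1 h2
      have := sin_sq_add_cos_sq θ
      constructor <;> simp only <;> nlinarith
    · rintro ⟨h1, h2⟩
      refine ⟨arccos (1 - 2 * x), ⟨arccos_pos.2 (by linarith), ?_⟩, ?_⟩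
      · refine lt_of_le_of_ne (arccos_le_pi _) fun h => ?_
        rw [arccos_eq_pi] at h
        linarith
      · simp only
        rw [cos_arccos (by linarith) (by linarith)]
        ring
  have hinj : Set.InjOn (fun θ : ℝ => (1 - cos θ) / 2) (Set.Ioo 0 π) := by
    intro x hx y hy h
    simp only at h
    exact injOn_cos (Set.Ioo_subset_Icc_self hx) (Set.Ioo_subset_Icc_self hy) (by linarith)
  have hder : ∀ θ ∈ Set.Ioo 0 π,
      HasDerivWithinAt (fun θ : ℝ => (1 - cos θ) / 2) (sin θ / 2) (Set.Ioo 0 π) θ := by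
    intro θ _
    have := ((hasDerivAt_cos θ).const_sub 1).div_const 2
    simpa using this.hasDerivWithinAt
  rw [ENNReal.ofReal_mul (by positivity),
    ← lintegral_beta (by positivity : (0 : ℝ) < (m + k) / 2) (by positivity : (0 : ℝ) < m / 2),
    ← himg, lintegral_image_eq_lintegral_abs_deriv_mul measurableSet_Ioo hder hinj,
    ← lintegral_const_mul _ (by fun_prop)]
  refine setLIntegral_congr_fun measurableSet_Ioo fun θ hθ => ?_
  obtain ⟨h1, h2⟩ := hθ
  have hs : 0 < sin (θ / 2) := sin_pos_of_pos_of_lt_pi (by linarith) (by linarith)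
  have hc : 0 < cos (θ / 2) := cos_pos_of_mem_Ioo ⟨by linarith, by linarith⟩
  have e0 : cos θ = 1 - 2 * sin (θ / 2) ^ 2 := by
    rw [show cos θ = cos (2 * (θ / 2)) by congr 1; ring, cos_two_mul, cos_sq']
    ring
  have e1 : (1 - cos θ) / 2 = sin (θ / 2) ^ (2 : ℝ) := by
    rw [e0, Real.rpow_two]; ring
  have e2 : 1 - (1 - cos θ) / 2 = cos (θ / 2) ^ (2 : ℝ) := by
    rw [e0, Real.rpow_two, cos_sq']; ring
  have e3 : sin θ = 2 * sin (θ / 2) * cos (θ / 2) := by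
    rw [← sin_two_mul]; congr 1; ring
  rw [e2, e1, e3, ← Real.rpow_mul hs.le, ← Real.rpow_mul hc.le, abs_of_pos (by positivity),
    ← ENNReal.ofReal_mul (by positivity), ← ENNReal.ofReal_mul (by positivity)]
  congr 1
  obtain ⟨j, rfl⟩ : ∃ j, m = j + 1 := ⟨m - 1, by omega⟩
  rw [show 2 * (((j + 1 : ℕ) + k : ℝ) / 2 - 1) = ((j + k : ℕ) : ℝ) - 1 by push_cast; ring,
    show 2 * (((j + 1 : ℕ) : ℝ) / 2 - 1) = (j : ℝ) - 1 by push_cast; ring,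
    Real.rpow_sub_one hs.ne', Real.rpow_sub_one hc.ne', Real.rpow_natCast, Real.rpow_natCast,
    Nat.add_sub_cancel]
  field_simp
  ring

/-! ### Mean and mean square of the distance -/

/-- The isometry group of a Euclidean space acts transitively on the unit sphere. -/
lemma exists_isometry_apply_eq {n : ℕ} {v e : EuclideanSpace ℝ (Fin n)} (h : ‖v‖ = ‖e‖) :
    ∃ L : EuclideanSpace ℝ (Fin n) ≃ₗᵢ[ℝ] EuclideanSpace ℝ (Fin n), L v = e :=
  ⟨_, Submodule.reflection_sub h⟩

/-- The radial factor for the weight `1_{r < 1}` is nonzero and finite, so it can be cancelled. -/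
lemma radial_integral_ne {m : ℕ} :
    (∫⁻ r in Set.Ioi (0 : ℝ), ENNReal.ofReal (r ^ m) *
        (Set.Iio (1 : ℝ)).indicator (fun _ => (1 : ℝ≥0∞)) r) ≠ 0 ∧
    (∫⁻ r in Set.Ioi (0 : ℝ), ENNReal.ofReal (r ^ m) *
        (Set.Iio (1 : ℝ)).indicator (fun _ => (1 : ℝ≥0∞)) r) ≠ ∞ := by
  have e : (∫⁻ r in Set.Ioi (0 : ℝ), ENNReal.ofReal (r ^ m) *
        (Set.Iio (1 : ℝ)).indicator (fun _ => (1 : ℝ≥0∞)) r) =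
      ∫⁻ r in Set.Ioo (0 : ℝ) 1, ENNReal.ofReal (r ^ m) := by
    have : ∀ r : ℝ, ENNReal.ofReal (r ^ m) * (Set.Iio (1 : ℝ)).indicator (fun _ => (1 : ℝ≥0∞)) r
        = (Set.Iio (1 : ℝ)).indicator (fun r => ENNReal.ofReal (r ^ m)) r := by
      intro r
      by_cases h : r < 1 <;> simp [h]
    simp_rw [this]
    rw [lintegral_indicator measurableSet_Iio, Measure.restrict_restrict measurableSet_Iio,
      Set.Iio_inter_Ioi]
  rw [e]
  constructor
  · rw [Ne, lintegral_eq_zero_iff (by fun_prop)]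
    intro h
    have h1 : ∀ᵐ r ∂(volume.restrict (Set.Ioo (0 : ℝ) 1)), False := by
      filter_upwards [h, ae_restrict_mem measurableSet_Ioo] with r hr hr'
      have : 0 < r ^ m := pow_pos hr'.1 m
      simp only [Pi.zero_apply, ENNReal.ofReal_eq_zero] at hr
      linarith
    rw [ae_iff] at h1
    simp at h1
  · refine ne_top_of_le_ne_top (b := 1) ENNReal.one_ne_top ?_
    calc ∫⁻ r in Set.Ioo (0 : ℝ) 1, ENNReal.ofReal (r ^ m) ≤ ∫⁻ r in Set.Ioo (0 : ℝ) 1, 1 := by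
          refine setLIntegral_mono measurable_const fun r hr => ?_
          exact ENNReal.ofReal_le_one.2 (pow_le_one₀ hr.1.le hr.2.le)
      _ = 1 := by simp

/-- The quotient of the two angular integrals, `∫ 2 sin (θ/2) sin^(m-1) θ` over
`∫ sin^(m-1) θ`. -/
lemma beta_ratio {m : ℕ} (hm : 1 ≤ m) :
    2 * beta ((m + 1) / 2) (m / 2) / beta (m / 2) (m / 2) =
      2 * gammaRatio (m / 2) / gammaRatio m := by
  have hm' : (0 : ℝ) < m := by exact_mod_cast hm
  have h1 := (Real.Gamma_pos_of_pos hm').ne'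
  have h2 := (Real.Gamma_pos_of_pos (by positivity : 0 < (m : ℝ) / 2)).ne'
  have h3 := (Real.Gamma_pos_of_pos (by positivity : 0 < (m : ℝ) / 2 + 1 / 2)).ne'
  have h4 := (Real.Gamma_pos_of_pos (by positivity : 0 < (m : ℝ) + 1 / 2)).ne'
  unfold gammaRatio beta
  rw [show ((m : ℝ) + 1) / 2 = m / 2 + 1 / 2 by ring,
    show (m : ℝ) / 2 + 1 / 2 + m / 2 = m + 1 / 2 by ring,
    show (m : ℝ) / 2 + m / 2 = m by ring]
  field_simp

/-- The mean distance. Since both the inner integral and Lebesgue measure are rotation invariant,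
averaging against `ν` may be replaced by averaging over the directions `y / ‖y‖` of the points of
the unit ball, which is computed in spherical coordinates. -/
lemma lintegral_dist_sphere {m : ℕ} (hm : 1 ≤ m)
    (ν : Measure (EuclideanSpace ℝ (Fin (m + 1)))) [IsProbabilityMeasure ν]
    (hsph : ∀ᵐ x ∂ν, ‖x‖ = 1)
    (hinv : ∀ L : EuclideanSpace ℝ (Fin (m + 1)) ≃ₗᵢ[ℝ] EuclideanSpace ℝ (Fin (m + 1)),
      Measure.map L ν = ν) :
    ∫⁻ x, ∫⁻ z, ENNReal.ofReal ‖x - z‖ ∂ν ∂ν =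
      ENNReal.ofReal (2 * gammaRatio (m / 2) / gammaRatio m) := by
  have hm' : (0 : ℝ) < m := by exact_mod_cast hm
  let e : EuclideanSpace ℝ (Fin (m + 1)) := EuclideanSpace.single 0 1
  have he : ‖e‖ = 1 := by simp [e]
  let w : ℝ → ℝ≥0∞ := (Set.Iio (1 : ℝ)).indicator (fun _ => (1 : ℝ≥0∞))
  have hw : Measurable w := measurable_const.indicator measurableSet_Iio
  let G : EuclideanSpace ℝ (Fin (m + 1)) → ℝ≥0∞ := fun x => ∫⁻ z, ENNReal.ofReal ‖x - z‖ ∂ν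
  let Q : EuclideanSpace ℝ (Fin (m + 1)) → ℝ≥0∞ := fun z =>
    ∫⁻ y, w ‖y‖ * ENNReal.ofReal ‖‖y‖⁻¹ • y - z‖
  have hG : ∀ v, ‖v‖ = 1 → G v = G e := by
    intro v hv
    obtain ⟨L, hL⟩ := exists_isometry_apply_eq (hv.trans he.symm)
    simp only [G]
    rw [← hL]
    conv_rhs => rw [← hinv L]
    rw [lintegral_map (by fun_prop) (by fun_prop)]
    simp_rw [← map_sub, L.norm_map]
  have hQ : ∀ v, ‖v‖ = 1 → Q v = Q e := by
    intro v hv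
    obtain ⟨L, hL⟩ := exists_isometry_apply_eq (hv.trans he.symm)
    simp only [Q]
    rw [← hL]
    conv_rhs => rw [← L.measurePreserving.lintegral_comp (by fun_prop)]
    simp_rw [L.norm_map, ← map_smul, ← map_sub, L.norm_map]
  have hne : ∀ᵐ y : EuclideanSpace ℝ (Fin (m + 1)), y ≠ 0 :=
    compl_mem_ae_iff.2 (measure_singleton 0)
  have hunit : ∀ y : EuclideanSpace ℝ (Fin (m + 1)), y ≠ 0 → ‖‖y‖⁻¹ • y‖ = 1 := fun y hy => by
    rw [norm_smul, norm_inv, norm_norm, inv_mul_cancel₀ (norm_ne_zero_iff.2 hy)]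
  have hLHS : ∫⁻ x, ∫⁻ z, ENNReal.ofReal ‖x - z‖ ∂ν ∂ν = G e := by
    calc ∫⁻ x, G x ∂ν = ∫⁻ _, G e ∂ν := lintegral_congr_ae (hsph.mono fun x hx => hG x hx)
      _ = G e := by simp
  have hswap : G e * ∫⁻ y : EuclideanSpace ℝ (Fin (m + 1)), w ‖y‖ = Q e := by
    calc G e * ∫⁻ y : EuclideanSpace ℝ (Fin (m + 1)), w ‖y‖
        = ∫⁻ y : EuclideanSpace ℝ (Fin (m + 1)), w ‖y‖ * G e := by
          rw [lintegral_mul_const _ (by fun_prop), mul_comm]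
      _ = ∫⁻ y : EuclideanSpace ℝ (Fin (m + 1)), w ‖y‖ * G (‖y‖⁻¹ • y) := by
          refine lintegral_congr_ae (hne.mono fun y hy => ?_)
          simp only
          rw [hG _ (hunit y hy)]
      _ = ∫⁻ y : EuclideanSpace ℝ (Fin (m + 1)), ∫⁻ z,
            w ‖y‖ * ENNReal.ofReal ‖‖y‖⁻¹ • y - z‖ ∂ν := by
          refine lintegral_congr fun y => ?_
          rw [lintegral_const_mul _ (by fun_prop)]
      _ = ∫⁻ z, Q z ∂ν := lintegral_lintegral_swap (by fun_prop)
      _ = ∫⁻ _, Q e ∂ν := lintegral_congr_ae (hsph.mono fun x hx => hQ x hx)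
      _ = Q e := by simp
  obtain ⟨K, hK0, hKt, hK⟩ := lintegral_spherical hm
  obtain ⟨hR0, hRt⟩ := radial_integral_ne (m := m)
  have hb0 : 0 < beta (m / 2) (m / 2) := beta_pos (by positivity) (by positivity)
  have hb1 : 0 < beta ((m + 1) / 2) (m / 2) := beta_pos (by positivity) (by positivity)
  have hW := hK w (fun _ => 1) hw measurable_const
  have hS := hK w (fun u => ENNReal.ofReal √(2 - 2 * u)) hw (by fun_prop)
  have i0 := lintegral_sin_pow_mul hm 0
  have i1 := lintegral_sin_pow_mul hm 1
  simp only [pow_zero, mul_one, Nat.cast_zero, add_zero] at i0 hW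
  simp only [pow_one, Nat.cast_one] at i1
  have hQe : Q e = ∫⁻ y : EuclideanSpace ℝ (Fin (m + 1)),
      w ‖y‖ * ENNReal.ofReal √(2 - 2 * (y 0 / ‖y‖)) := by
    refine lintegral_congr_ae (hne.mono fun y hy => ?_)
    simp only
    congr 2
    rw [← Real.sqrt_sq (norm_nonneg (‖y‖⁻¹ • y - e)), norm_sub_sq_real,
      hunit y hy, he, inner_smul_left]
    congr 1
    simp [e, EuclideanSpace.inner_single_right]
    ring
  have hang : ∫⁻ θ in Set.Ioo 0 π, ENNReal.ofReal (sin θ ^ (m - 1)) *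
      ENNReal.ofReal √(2 - 2 * cos θ) =
      ENNReal.ofReal 2 * ENNReal.ofReal (2 ^ (m - 1) * beta ((m + 1) / 2) (m / 2)) := by
    rw [← i1, ← lintegral_const_mul _ (by fun_prop)]
    refine setLIntegral_congr_fun measurableSet_Ioo fun θ hθ => ?_
    have hs : 0 < sin (θ / 2) := sin_pos_of_pos_of_lt_pi (by linarith [hθ.1])
      (by linarith [hθ.1, hθ.2])
    have hs' : 0 < sin θ := sin_pos_of_pos_of_lt_pi hθ.1 hθ.2
    have e0 : 2 - 2 * cos θ = (2 * sin (θ / 2)) ^ 2 := by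
      rw [show cos θ = cos (2 * (θ / 2)) by congr 1; ring, cos_two_mul, cos_sq']
      ring
    rw [e0, Real.sqrt_sq (by positivity), ← ENNReal.ofReal_mul (by positivity),
      ← ENNReal.ofReal_mul (by positivity)]
    congr 1
    ring
  rw [hLHS, ← beta_ratio hm]
  rw [hQe, hS, hang, hW, i0] at hswap
  set R := ∫⁻ r in Set.Ioi (0 : ℝ), ENNReal.ofReal (r ^ m) * w r
  have hKR0 : K * R ≠ 0 := mul_ne_zero hK0 hR0
  have hKRt : K * R ≠ ∞ := ENNReal.mul_ne_top hKt hRt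
  rw [mul_left_comm, ENNReal.mul_right_inj hKR0 hKRt, ← ENNReal.ofReal_mul (by positivity)] at hswap
  have hc : (0 : ℝ) < 2 ^ (m - 1) * beta (m / 2) (m / 2) := by positivity
  rw [ENNReal.eq_div_iff (by simpa using hc) ENNReal.ofReal_ne_top |>.2
    ((mul_comm _ _).trans hswap), ← ENNReal.ofReal_div_of_pos hc]
  congr 1
  field_simp

/-- The mean squared distance is `2`, by the parallelogram identity and the symmetry
`z ↦ -z` of `ν`. -/
lemma lintegral_dist_sq_sphere {n : ℕ}
    (ν : Measure (EuclideanSpace ℝ (Fin n))) [IsProbabilityMeasure ν]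
    (hsph : ∀ᵐ x ∂ν, ‖x‖ = 1)
    (hinv : ∀ L : EuclideanSpace ℝ (Fin n) ≃ₗᵢ[ℝ] EuclideanSpace ℝ (Fin n),
      Measure.map L ν = ν) :
    ∫⁻ x, ∫⁻ z, ENNReal.ofReal (‖x - z‖ ^ 2) ∂ν ∂ν = ENNReal.ofReal 2 := by
  have h : ∀ x, ‖x‖ = 1 → ∫⁻ z, ENNReal.ofReal (‖x - z‖ ^ 2) ∂ν = ENNReal.ofReal 2 := by
    intro x hx
    have h1 : ∫⁻ z, ENNReal.ofReal (‖x + z‖ ^ 2) ∂ν = ∫⁻ z, ENNReal.ofReal (‖x - z‖ ^ 2) ∂ν := by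
      conv_rhs => rw [← hinv (LinearIsometryEquiv.neg ℝ)]
      rw [lintegral_map (by fun_prop) (by fun_prop)]
      simp
    have h2 : ∫⁻ z, ENNReal.ofReal (‖x - z‖ ^ 2) ∂ν + ∫⁻ z, ENNReal.ofReal (‖x - z‖ ^ 2) ∂ν =
        ENNReal.ofReal 4 := by
      nth_rewrite 2 [← h1]
      rw [← lintegral_add_left (by fun_prop)]
      calc _ = ∫⁻ _, ENNReal.ofReal 4 ∂ν := by
            refine lintegral_congr_ae (hsph.mono fun z hz => ?_)
            simp only
            rw [← ENNReal.ofReal_add (by positivity) (by positivity)]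
            congr 1
            have := parallelogram_law_with_norm ℝ x z
            rw [hx, hz] at this
            linarith
        _ = _ := by simp
    rw [← two_mul, show (4 : ℝ) = 2 * 2 by norm_num, ENNReal.ofReal_mul (by norm_num)] at h2
    simpa [ENNReal.mul_right_inj] using h2
  calc _ = ∫⁻ _, ENNReal.ofReal 2 ∂ν := lintegral_congr_ae (hsph.mono fun x hx => h x hx)
    _ = _ := by simp

/-! ### The variance -/

lemma variance_dist_prod {m : ℕ} (hm : 1 ≤ m)
    (ν : Measure (EuclideanSpace ℝ (Fin (m + 1)))) [IsProbabilityMeasure ν]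
    (hsph : ∀ᵐ x ∂ν, ‖x‖ = 1)
    (hinv : ∀ L : EuclideanSpace ℝ (Fin (m + 1)) ≃ₗᵢ[ℝ] EuclideanSpace ℝ (Fin (m + 1)),
      Measure.map L ν = ν) :
    variance (fun p : EuclideanSpace ℝ (Fin (m + 1)) × EuclideanSpace ℝ (Fin (m + 1)) =>
      ‖p.1 - p.2‖) (ν.prod ν) = 2 - (2 * gammaRatio (m / 2) / gammaRatio m) ^ 2 := by
  have hm' : (0 : ℝ) < m := by exact_mod_cast hm
  have hr1 := gammaRatio_pos hm'
  have hr2 := gammaRatio_pos (by positivity : (0 : ℝ) < m / 2)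
  have hmem : MemLp (fun p : EuclideanSpace ℝ (Fin (m + 1)) × EuclideanSpace ℝ (Fin (m + 1)) =>
      ‖p.1 - p.2‖) 2 (ν.prod ν) := by
    refine MemLp.of_bound (by fun_prop) 2 ?_
    filter_upwards [Measure.quasiMeasurePreserving_fst.ae hsph,
      Measure.quasiMeasurePreserving_snd.ae hsph] with p h1 h2
    rw [norm_norm]
    linarith [norm_sub_le p.1 p.2]
  have e1 : ∫ p, ‖p.1 - p.2‖ ∂(ν.prod ν) = 2 * gammaRatio (m / 2) / gammaRatio m := by
    rw [integral_eq_lintegral_of_nonneg_ae (.of_forall fun _ => norm_nonneg _) (by fun_prop),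
      lintegral_prod _ (by fun_prop), lintegral_dist_sphere hm ν hsph hinv,
      ENNReal.toReal_ofReal (by positivity)]
  have e2 : ∫ p, ‖p.1 - p.2‖ ^ 2 ∂(ν.prod ν) = 2 := by
    rw [integral_eq_lintegral_of_nonneg_ae (.of_forall fun _ => by positivity) (by fun_prop),
      lintegral_prod _ (by fun_prop), lintegral_dist_sq_sphere ν hsph hinv,
      ENNReal.toReal_ofReal (by positivity)]
  rw [variance_eq_sub hmem, e1]
  simp only [Pi.pow_apply]
  rw [e2]

lemma enorm2_eq_norm {n : ℕ} (x : Fin n → ℝ) : enorm2 x = ‖WithLp.toLp 2 x‖ := by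
  simp [enorm2, EuclideanSpace.norm_eq]

lemma measurable_enorm2 {n : ℕ} : Measurable (enorm2 (n := n)) := by
  unfold enorm2
  fun_prop

/-- A uniform measure on the sphere, transported from `Fin n → ℝ` to `EuclideanSpace ℝ (Fin n)`,
is invariant under all linear isometries. -/
lemma IsUniformSphere.map_toLp {n : ℕ} {ν : Measure (Fin n → ℝ)} (h : IsUniformSphere ν) :
    IsProbabilityMeasure (Measure.map (WithLp.toLp 2) ν : Measure (EuclideanSpace ℝ (Fin n))) ∧
    (∀ᵐ x ∂(Measure.map (WithLp.toLp 2) ν : Measure (EuclideanSpace ℝ (Fin n))), ‖x‖ = 1) ∧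
    ∀ L : EuclideanSpace ℝ (Fin n) ≃ₗᵢ[ℝ] EuclideanSpace ℝ (Fin n),
      Measure.map L (Measure.map (WithLp.toLp 2) ν) = Measure.map (WithLp.toLp 2) ν := by
  obtain ⟨hp, hs, hi⟩ := h
  have ht : Measurable (WithLp.toLp 2 : (Fin n → ℝ) → EuclideanSpace ℝ (Fin n)) := by fun_prop
  refine ⟨Measure.isProbabilityMeasure_map ht.aemeasurable, ?_, fun L => ?_⟩
  · rw [ae_map_iff ht.aemeasurable (measurableSet_eq_fun (by fun_prop) (by fun_prop))]
    have hms : MeasurableSet {x : Fin n → ℝ | enorm2 x = 1} :=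
      measurableSet_eq_fun measurable_enorm2 measurable_const
    have := (prob_compl_eq_zero_iff hms).2 hs
    filter_upwards [compl_mem_ae_iff.2 this] with x hx
    rw [compl_compl] at hx
    rw [← enorm2_eq_norm]
    exact hx
  · let L0 : (Fin n → ℝ) ≃ₗ[ℝ] (Fin n → ℝ) :=
      (WithLp.linearEquiv 2 ℝ (Fin n → ℝ)).symm ≪≫ₗ L.toLinearEquiv ≪≫ₗ
        WithLp.linearEquiv 2 ℝ (Fin n → ℝ)
    have hL0 : ∀ x, WithLp.toLp 2 (L0 x) = L (WithLp.toLp 2 x) := fun x => rfl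
    have hL0m : Measurable L0 := (LinearMap.continuous_of_finiteDimensional L0.toLinearMap).measurable
    have h0 := hi L0 fun x => by
      rw [enorm2_eq_norm, enorm2_eq_norm, hL0, L.norm_map]
    conv_rhs => rw [← h0]
    rw [Measure.map_map (by fun_prop) ht, Measure.map_map ht hL0m]
    rfl

lemma variance_dist_eq {Ω : Type*} [MeasurableSpace Ω] (μ : Measure Ω) [IsProbabilityMeasure μ]
    {m : ℕ} (hm : 1 ≤ m) {ν : Measure (Fin (m + 1) → ℝ)} (hν : IsUniformSphere ν)
    {X Y : Ω → (Fin (m + 1) → ℝ)} (hIndep : IndepFun X Y μ)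
    (hX : Measure.map X μ = ν) (hY : Measure.map Y μ = ν) :
    variance (fun ω => enorm2 (X ω - Y ω)) μ =
      2 - (2 * gammaRatio (m / 2) / gammaRatio m) ^ 2 := by
  obtain ⟨hp, hs, hi⟩ := hν.map_toLp
  have := hν.1
  -- `Measure.map` sends a function that is not a.e.-measurable to `0`, which is not a
  -- probability measure.
  have hXm : AEMeasurable X μ := AEMeasurable.of_map_ne_zero (by
    rw [hX]; exact IsProbabilityMeasure.ne_zero ν)
  have hYm : AEMeasurable Y μ := AEMeasurable.of_map_ne_zero (by
    rw [hY]; exact IsProbabilityMeasure.ne_zero ν)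
  have ht : Measurable (WithLp.toLp 2 : (Fin (m + 1) → ℝ) → EuclideanSpace ℝ (Fin (m + 1))) := by
    fun_prop
  have hlaw := (indepFun_iff_map_prod_eq_prod_map_map hXm hYm).1 hIndep
  rw [hX, hY] at hlaw
  rw [← variance_dist_prod hm _ hs hi, Measure.map_prod_map _ _ ht ht,
    variance_map (by fun_prop) (by fun_prop), ← hlaw, variance_map (by fun_prop) (by fun_prop)]
  congr 1
  funext ω
  simp [enorm2_eq_norm]

/-- **The variance of the distance of two random points on `S^{n-1}` and its asymptotics.** -/
theorem variance_dist_sphere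
    {Ω : Type*} [MeasurableSpace Ω] (μ : Measure Ω) [IsProbabilityMeasure μ]
    (ν : (n : ℕ) → Measure (Fin n → ℝ)) (hν : ∀ n, 2 ≤ n → IsUniformSphere (ν n))
    (X Y : (n : ℕ) → Ω → (Fin n → ℝ))
    (hIndep : ∀ n, 2 ≤ n → IndepFun (X n) (Y n) μ)
    (hX : ∀ n, 2 ≤ n → Measure.map (X n) μ = ν n)
    (hY : ∀ n, 2 ≤ n → Measure.map (Y n) μ = ν n) :
    (∀ n, 2 ≤ n →
      variance (fun ω => enorm2 (X n ω - Y n ω)) μ =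
        2 - (2 ^ (n - 1) * Real.Gamma (n / 2) ^ 2 /
          (Real.sqrt π * Real.Gamma ((n : ℝ) - 1 / 2))) ^ 2) ∧
    Tendsto (fun n : ℕ => 2 * (n : ℝ) *
      variance (fun ω => enorm2 (X n ω - Y n ω)) μ) atTop (𝓝 1) ∧
    Tendsto (fun n : ℕ => variance (fun ω => enorm2 (X n ω - Y n ω)) μ) atTop (𝓝 0) := by
  have hvar : ∀ m : ℕ, 1 ≤ m →
      variance (fun ω => enorm2 (X (m + 1) ω - Y (m + 1) ω)) μ =
        2 - (2 * gammaRatio (m / 2) / gammaRatio m) ^ 2 := fun m hm =>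
    variance_dist_eq μ hm (hν _ (by omega)) (hIndep _ (by omega)) (hX _ (by omega))
      (hY _ (by omega))
  have hlim : Tendsto (fun n : ℕ => 2 * (n : ℝ) *
      variance (fun ω => enorm2 (X n ω - Y n ω)) μ) atTop (𝓝 1) := by
    rw [← tendsto_add_atTop_iff_nat 1]
    refine tendsto_gamma_expr.congr' ?_
    filter_upwards [eventually_ge_atTop 1] with m hm
    rw [hvar m hm]
    push_cast
    rfl
  refine ⟨fun n hn => ?_, hlim, ?_⟩
  · obtain ⟨m, rfl⟩ : ∃ m, n = m + 1 := ⟨n - 1, by omega⟩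
    rw [hvar m (by omega), Nat.add_sub_cancel, mean_eq_gammaRatio (by omega)]
  · have hi : Tendsto (fun n : ℕ => (1 / 2 : ℝ) * ((n : ℝ))⁻¹) atTop (𝓝 0) := by
      simpa using (tendsto_inv_atTop_nhds_zero_nat (𝕜 := ℝ)).const_mul (1 / 2 : ℝ)
    have := hi.mul hlim
    rw [zero_mul] at this
    refine this.congr' ?_
    filter_upwards [eventually_gt_atTop 0] with n hn
    have : (n : ℝ) ≠ 0 := by exact_mod_cast hn.ne'
    field_simp
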